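/- arXiv:2301.05153 — 2 statements merged into one kernel-verified Lean document; each statement's English description precedes it below -/
import Mathlib

section
/- Suppose λ is an r-multipartition all of whose components are e-cores (a multicore), and suppose there exists a multicharge a' = (a'_1,…,a'_r) with a'_j ≡ a_j (mod e) for all j such that |ℓ^{a'}_{ij}(λ) − ℓ^{a'}_{ik}(λ)| ≤ 1 for every i ∈ {0,…,e−1} and all j,k ∈ {1,…,r}. Then |δ^j_i(λ) − δ^k_i(λ)| ≤ 2 for every i ∈ ℤ/eℤ and all j,k ∈ {1,…,r}. -/
/-!
Combinatorial framework for multipartitions, residues, β-sets, abacus levels,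
weights, hubs, core blocks and Scopes-type moves, following Fayers and the paper.
Rows and columns of Young diagrams are indexed from 0, so the node in row `b`
and column `c` (0-based) of component `j` has residue `a j + c - b` mod `e`.
-/

open scoped Classical

namespace AK

/-- A partition, given by its (antitone, finitely supported) sequence of parts,
rows indexed from `0`. -/
structure PartitionFun : Type where
  part : ℕ → ℕ
  antitone : Antitone part
  finite_support : ∃ N, ∀ b, N ≤ b → part b = 0

/-- The node in row `b`, column `c` (0-based) belongs to the Young diagram. -/
def PartitionFun.InDiag (lam : PartitionFun) (b c : ℕ) : Prop := c < lam.part b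

/-- The node `(b,c)` is removable: deleting it leaves the diagram of a partition. -/
def PartitionFun.Removable (lam : PartitionFun) (b c : ℕ) : Prop :=
  lam.part b = c + 1 ∧ lam.part (b + 1) ≤ c

/-- The node `(b,c)` is addable: adjoining it gives the diagram of a partition. -/
def PartitionFun.Addable (lam : PartitionFun) (b c : ℕ) : Prop :=
  lam.part b = c ∧ (b = 0 ∨ lam.part b < lam.part (b - 1))

/-- An `r`-multipartition. -/
abbrev Multipartition (r : ℕ) := Fin r → PartitionFun

/-- Nodes: `(b, c, j)` with row `b`, column `c`, component `j`. -/
abbrev Node (r : ℕ) := ℕ × ℕ × Fin r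

/-- The Young diagram of a multipartition, as a set of nodes. -/
def diag {r : ℕ} (lam : Multipartition r) : Set (Node r) :=
  {x | (lam x.2.2).InDiag x.1 x.2.1}

/-- The size `n` of a multipartition of `n`. -/
noncomputable def msize {r : ℕ} (lam : Multipartition r) : ℕ :=
  Set.ncard (diag lam)

/-- `c_i(λ)`: the number of nodes of residue `i` (mod `e`). -/
noncomputable def nodeCount {r : ℕ} (e : ℕ) (a : Fin r → ℤ) (lam : Multipartition r)
    (i : ℤ) : ℕ :=
  Set.ncard {x : Node r | (lam x.2.2).InDiag x.1 x.2.1 ∧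
    (a x.2.2 + (x.2.1 : ℤ) - (x.1 : ℤ)) % (e : ℤ) = i % e}

/-- Number of removable nodes of residue `i` in component `j`. -/
noncomputable def removableCount {r : ℕ} (e : ℕ) (a : Fin r → ℤ) (lam : Multipartition r)
    (i : ℤ) (j : Fin r) : ℕ :=
  Set.ncard {p : ℕ × ℕ | (lam j).Removable p.1 p.2 ∧
    (a j + (p.2 : ℤ) - (p.1 : ℤ)) % (e : ℤ) = i % e}

/-- Number of addable nodes of residue `i` in component `j`. -/
noncomputable def addableCount {r : ℕ} (e : ℕ) (a : Fin r → ℤ) (lam : Multipartition r)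
    (i : ℤ) (j : Fin r) : ℕ :=
  Set.ncard {p : ℕ × ℕ | (lam j).Addable p.1 p.2 ∧
    (a j + (p.2 : ℤ) - (p.1 : ℤ)) % (e : ℤ) = i % e}

/-- `δ^j_i(λ)` = (removable `i`-nodes of component `j`) − (addable `i`-nodes of component `j`). -/
noncomputable def delta {r : ℕ} (e : ℕ) (a : Fin r → ℤ) (lam : Multipartition r)
    (i : ℤ) (j : Fin r) : ℤ :=
  (removableCount e a lam i j : ℤ) - (addableCount e a lam i j : ℤ)

/-- The hub `δ_i(λ) = Σ_j δ^j_i(λ)`. -/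
noncomputable def hub {r : ℕ} (e : ℕ) (a : Fin r → ℤ) (lam : Multipartition r) (i : ℤ) : ℤ :=
  ∑ j : Fin r, delta e a lam i j

/-- Two multipartitions have the same hub. -/
def SameHub {r : ℕ} (e : ℕ) (a : Fin r → ℤ) (lam mu : Multipartition r) : Prop :=
  ∀ i : ℤ, hub e a lam i = hub e a mu i

/-- `d_i(m) = min { δ^j_i(m) : 1 ≤ j ≤ r }`. -/
noncomputable def dmin {r : ℕ} (e : ℕ) (a : Fin r → ℤ) (lam : Multipartition r) (i : ℤ) : ℤ :=
  sInf {x : ℤ | ∃ j : Fin r, delta e a lam i j = x}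

/-- The weight `w(λ) = Σ_j c_{a_j}(λ) − (1/2) Σ_{i∈ℤ/eℤ} (c_i(λ) − c_{i+1}(λ))²`. -/
noncomputable def weight {r : ℕ} (e : ℕ) (a : Fin r → ℤ) (lam : Multipartition r) : ℚ :=
  (∑ j : Fin r, (nodeCount e a lam (a j) : ℚ)) -
    (1 / 2 : ℚ) * ∑ i ∈ Finset.range e,
      ((nodeCount e a lam (i : ℤ) : ℚ) - (nodeCount e a lam ((i : ℤ) + 1) : ℚ)) ^ 2

/-- The β-set `B^j = {λ_b + a_j − b : b ≥ 1}` (here with rows indexed from 0). -/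
def betaSet (aj : ℤ) (lam : PartitionFun) : Set ℤ :=
  {x | ∃ b : ℕ, x = (lam.part b : ℤ) + aj - ((b : ℤ) + 1)}

/-- A partition is an `e`-core: `β ∈ B` implies `β − e ∈ B`. -/
def IsECore (e : ℕ) (aj : ℤ) (lam : PartitionFun) : Prop :=
  ∀ x ∈ betaSet aj lam, x - (e : ℤ) ∈ betaSet aj lam

/-- A multicore: all components are `e`-cores. -/
def IsMulticore {r : ℕ} (e : ℕ) (a : Fin r → ℤ) (lam : Multipartition r) : Prop :=
  ∀ j, IsECore e (a j) (lam j)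

/-- `ℓ^a_{ij}(λ)`: the level of the lowest bead on runner `i`, i.e. the largest `x`
with `x·e + i` in the β-set. -/
noncomputable def level (e : ℕ) (aj : ℤ) (lam : PartitionFun) (i : ℕ) : ℤ :=
  sSup {x : ℤ | x * (e : ℤ) + (i : ℤ) ∈ betaSet aj lam}

/-- `γ^{jk}_i(λ) = ℓ^a_{ij}(λ) − ℓ^a_{ik}(λ)`. -/
noncomputable def gamma {r : ℕ} (e : ℕ) (a : Fin r → ℤ) (lam : Multipartition r)
    (i : ℕ) (j k : Fin r) : ℤ :=
  level e (a j) (lam j) i - level e (a k) (lam k) i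

/-- `γ^{jk}_{il}(λ) = γ^{jk}_i(λ) − γ^{jk}_l(λ)`. -/
noncomputable def gammaD {r : ℕ} (e : ℕ) (a : Fin r → ℤ) (lam : Multipartition r)
    (i l : ℕ) (j k : Fin r) : ℤ :=
  gamma e a lam i j k - gamma e a lam l j k

/-- Move a bead from runner `i` to runner `l` in the β-set `S`: replace the largest
element of `S` congruent to `i` mod `e` by the smallest integer congruent to `l`
mod `e` not in `S`. -/
noncomputable def moveBead (e : ℕ) (i l : ℕ) (S : Set ℤ) : Set ℤ :=
  insert (sInf {x : ℤ | x % (e : ℤ) = (l : ℤ) % e ∧ x ∉ S})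
    (S \ {sSup {x : ℤ | x % (e : ℤ) = (i : ℤ) % e ∧ x ∈ S}})

/-- The effect of `s^{jk}_{il}` on the tuple of β-sets: move a bead from runner `i`
to runner `l` in component `j`, and from runner `l` to runner `i` in component `k`. -/
noncomputable def swapSets {r : ℕ} (e i l : ℕ) (j k : Fin r) (S : Fin r → Set ℤ) :
    Fin r → Set ℤ :=
  Function.update (Function.update S j (moveBead e i l (S j))) k
    (moveBead e l i (Function.update S j (moveBead e i l (S j)) k))

/-- `m' = s^{jk}_{il}(m)`, expressed via β-sets. -/
def IsSwap {r : ℕ} (e : ℕ) (a : Fin r → ℤ) (i l : ℕ) (j k : Fin r)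
    (m m' : Multipartition r) : Prop :=
  ∀ j', betaSet (a j') (m' j') = swapSets e i l j k (fun t => betaSet (a t) (m t)) j'

/-- `λ` lies in a core block: its weight is minimal among the weights of all
multipartitions with the same hub. -/
def MinimalWeight {r : ℕ} (e : ℕ) (a : Fin r → ℤ) (lam : Multipartition r) : Prop :=
  ∀ mu : Multipartition r, SameHub e a lam mu → weight e a lam ≤ weight e a mu

/-- `(b_0,…,b_{e−1})` is a base tuple for `mu` with respect to the multicharge `a'`
(congruent to `a` componentwise mod `e`): each `ℓ^{a'}_{ij}(mu)` is `b i` or `b i + 1`. -/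
def IsBaseTuple {r : ℕ} (e : ℕ) (a : Fin r → ℤ) (mu : Multipartition r)
    (a' : Fin r → ℤ) (b : ℕ → ℤ) : Prop :=
  (∀ j, (e : ℤ) ∣ (a' j - a j)) ∧
    ∀ i < e, ∀ j, level e (a' j) (mu j) i = b i ∨ level e (a' j) (mu j) i = b i + 1

/-- `K_i(C)` for the core block of `mu`: among all base tuples (over all admissible
multicharges), take `b i` maximal and then `b (i−1)` minimal, and set
`K_i = b_i − b_{i−1} − 1` for `i ≠ 0`, `K_0 = b_0 − b_{e−1} − 2`. -/
noncomputable def Kconst {r : ℕ} (e : ℕ) (a : Fin r → ℤ) (mu : Multipartition r)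
    (i : ℕ) : ℤ :=
  let Bi : ℤ := sSup {x : ℤ | ∃ a' bt, IsBaseTuple e a mu a' bt ∧ bt i = x}
  let iprev : ℕ := if i = 0 then e - 1 else i - 1
  let Bp : ℤ := sInf {x : ℤ | ∃ a' bt, IsBaseTuple e a mu a' bt ∧ bt i = Bi ∧ bt iprev = x}
  Bi - Bp - (if i = 0 then 2 else 1)

/-- The map `φ_i : ℤ → ℤ`. -/
def phiMap (e i : ℕ) (x : ℤ) : ℤ :=
  if x % (e : ℤ) = ((i : ℤ) - 1) % e then x + 1
  else if x % (e : ℤ) = (i : ℤ) % e then x - 1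
  else x

/-- Lexicographic order on multipartitions: `λ > μ`. -/
def lexGT {r : ℕ} (lam mu : Multipartition r) : Prop :=
  ∃ j : Fin r, (∀ j' < j, (lam j').part = (mu j').part) ∧
    ∃ i : ℕ, (∀ i' < i, (lam j).part i' = (mu j).part i') ∧
      (mu j).part i < (lam j).part i

/-- `x` is above `y`: `j < j'` or (`j = j'` and `b < b'`). -/
def NodeAbove {r : ℕ} (x y : Node r) : Prop :=
  x.2.2 < y.2.2 ∨ (x.2.2 = y.2.2 ∧ x.1 < y.1)

/-- The order on nodes: `x < y` iff `y` is above `x`. -/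
def NodeLT {r : ℕ} (x y : Node r) : Prop := NodeAbove y x

/-- `N_A(λ)` = (addable `i`-nodes of `λ` below `A`) − (removable `i`-nodes of `λ` below `A`). -/
noncomputable def Nfac {r : ℕ} (e : ℕ) (a : Fin r → ℤ) (lam : Multipartition r)
    (i : ℤ) (A : Node r) : ℤ :=
  (Set.ncard {y : Node r | (lam y.2.2).Addable y.1 y.2.1 ∧
      (a y.2.2 + (y.2.1 : ℤ) - (y.1 : ℤ)) % (e : ℤ) = i % e ∧ NodeAbove A y} : ℤ) -
  (Set.ncard {y : Node r | (lam y.2.2).Removable y.1 y.2.1 ∧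
      (a y.2.2 + (y.2.1 : ℤ) - (y.1 : ℤ)) % (e : ℤ) = i % e ∧ NodeAbove A y} : ℤ)

/-- `lam` is obtained from `mu` by adding one `e`-rim hook to some component:
on β-sets, some `β ∈ B^j` with `β + e ∉ B^j` is replaced by `β + e`. -/
def AddRimHook {r : ℕ} (e : ℕ) (a : Fin r → ℤ) (mu lam : Multipartition r) : Prop :=
  ∃ (j : Fin r) (β : ℤ), β ∈ betaSet (a j) (mu j) ∧ β + (e : ℤ) ∉ betaSet (a j) (mu j) ∧
    betaSet (a j) (lam j) = insert (β + (e : ℤ)) (betaSet (a j) (mu j) \ {β}) ∧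
    ∀ j' ≠ j, betaSet (a j') (lam j') = betaSet (a j') (mu j')

/-- The number of inversions (length) of a permutation of `Fin d`. -/
noncomputable def permLength (d : ℕ) (σ : Equiv.Perm (Fin d)) : ℕ :=
  (Finset.univ.filter (fun p : Fin d × Fin d => p.1 < p.2 ∧ σ p.2 < σ p.1)).card

/-!
Write `ℓ_i(B)` for the level of the last bead of `B` on runner `i`, for every integer `i`, so that
`ℓ_{i+e} = ℓ_i - 1`. Sending a node to its content matches the removable nodes of a partition with
`B_t \ B_{t+1}` and the addable nodes with `B_{t+1} \ B_t`, where `B_{t+1} = B_t + 1` is the β-set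
for the charge `t + 1`. For an `e`-core the beads of residue `i` in `B_t` and `B_{t+1}` occupy
exactly the levels up to `ℓ_i` and `ℓ_{i-1}`, whence `δ_i = ℓ_i - ℓ_{i-1}`. The difference
`δ^j_i - δ^k_i` is thus a difference of two level differences, each at most `1` in absolute value.
-/

section Runners

/-- The level of the last bead on runner `i` of the abacus display of `B`. Unlike in `level`, the
index `i` is any integer, so that runner `i - 1` makes sense for all `i`; the value is junk if the
runner has no bead or no last bead. -/
noncomputable def runnerLevel (e : ℕ) (B : Set ℤ) (i : ℤ) : ℤ :=
  sSup {x : ℤ | x * e + i ∈ B}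

/-- A set of beads on the `e`-runner abacus having a last bead, having all positions far enough up
occupied, and with no gap above any bead on the same runner: the β-sets of `e`-cores. -/
structure IsFlush (e : ℕ) (B : Set ℤ) : Prop where
  bddAbove : BddAbove B
  exists_Iic_subset : ∃ m, Set.Iic m ⊆ B
  sub_mem : ∀ x ∈ B, x - e ∈ B

namespace IsFlush

variable {e : ℕ} {B C : Set ℤ}

lemma sub_mul_mem (hB : IsFlush e B) {x : ℤ} (hx : x ∈ B) (n : ℕ) : x - n * e ∈ B := by
  induction n with
  | zero => simpa using hx
  | succ n ih =>
    convert hB.sub_mem _ ih using 1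
    push_cast
    ring

lemma isGreatest_runnerLevel (hB : IsFlush e B) (he : 0 < e) (i : ℤ) :
    IsGreatest {x : ℤ | x * e + i ∈ B} (runnerLevel e B i) := by
  have he' : (0 : ℤ) < e := by exact_mod_cast he
  have hne : {x : ℤ | x * e + i ∈ B}.Nonempty := by
    obtain ⟨m, hm⟩ := hB.exists_Iic_subset
    exact ⟨(m - i) / e, hm (le_sub_iff_add_le.1 (Int.ediv_mul_le _ he'.ne'))⟩
  have hbdd : BddAbove {x : ℤ | x * e + i ∈ B} := by
    obtain ⟨M, hM⟩ := hB.bddAbove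
    exact ⟨(M - i) / e, fun x hx =>
      (Int.le_ediv_iff_mul_le he').2 (le_sub_iff_add_le.2 (hM hx))⟩
  exact ⟨Int.csSup_mem hne hbdd, fun x hx => le_csSup hbdd hx⟩

lemma mul_add_mem_iff (hB : IsFlush e B) (he : 0 < e) {x i : ℤ} :
    x * e + i ∈ B ↔ x ≤ runnerLevel e B i := by
  obtain ⟨hmem, hle⟩ := hB.isGreatest_runnerLevel he i
  refine ⟨fun hx => hle hx, fun hx => ?_⟩
  obtain ⟨n, hn⟩ := Int.le.dest hx
  convert hB.sub_mul_mem hmem n using 1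
  rw [← hn]
  ring

lemma runnerLevel_add_mul (hB : IsFlush e B) (he : 0 < e) (i m : ℤ) :
    runnerLevel e B (i + m * e) = runnerLevel e B i - m := by
  refine eq_of_forall_le_iff fun x => ?_
  rw [le_sub_iff_add_le, ← hB.mul_add_mem_iff he, ← hB.mul_add_mem_iff he]
  ring_nf

lemma runnerLevel_sub_runnerLevel_emod (hB : IsFlush e B) (hC : IsFlush e C) (he : 0 < e)
    (i : ℤ) : runnerLevel e B (i % e) - runnerLevel e C (i % e) =
      runnerLevel e B i - runnerLevel e C i := by
  conv_rhs => rw [← Int.emod_add_ediv_mul i e]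
  rw [hB.runnerLevel_add_mul he, hC.runnerLevel_add_mul he, sub_sub_sub_cancel_right]

lemma sdiff_residue_eq_image_Ioc (hB : IsFlush e B) (hC : IsFlush e C) (he : 0 < e) (i : ℤ) :
    {x | x ∈ B \ C ∧ x % e = i % e} =
      (fun y : ℤ => y * e + i) '' Set.Ioc (runnerLevel e C i) (runnerLevel e B i) := by
  ext x
  constructor
  · rintro ⟨⟨hxB, hxC⟩, hxi⟩
    obtain ⟨y, hy⟩ := Int.ModEq.dvd (Eq.symm hxi : i ≡ x [ZMOD e])
    obtain rfl : x = y * e + i := by linarith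
    rw [hB.mul_add_mem_iff he] at hxB
    rw [hC.mul_add_mem_iff he, not_le] at hxC
    exact ⟨y, ⟨hxC, hxB⟩, rfl⟩
  · rintro ⟨y, ⟨hyC, hyB⟩, rfl⟩
    exact ⟨⟨(hB.mul_add_mem_iff he).2 hyB, fun h => hyC.not_ge ((hC.mul_add_mem_iff he).1 h)⟩,
      by simp⟩

lemma ncard_sdiff_residue (hB : IsFlush e B) (hC : IsFlush e C) (he : 0 < e) (i : ℤ) :
    {x | x ∈ B \ C ∧ x % e = i % e}.ncard = (runnerLevel e B i - runnerLevel e C i).toNat := by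
  have hinj : Function.Injective fun y : ℤ => y * e + i := fun y z h => by
    simpa [he.ne'] using h
  rw [hB.sdiff_residue_eq_image_Ioc hC he, Set.ncard_image_of_injective _ hinj,
    ← Finset.coe_Ioc, Set.ncard_coe_finset, Int.card_Ioc]

end IsFlush

end Runners

section BetaSets

/-- The content of the node `(b, c)` with respect to the charge `t`; its residue is the content
modulo `e`. -/
def content (t : ℤ) (p : ℕ × ℕ) : ℤ := t + p.2 - p.1

namespace PartitionFun

/-- The β-number of row `b` for the charge `t`. -/
def beta (l : PartitionFun) (t : ℤ) (b : ℕ) : ℤ := l.part b + t - (b + 1)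

variable (l : PartitionFun) (t : ℤ)

lemma beta_strictAnti : StrictAnti (l.beta t) := fun b b' hb => by
  have := l.antitone hb.le
  simp only [beta]
  omega

lemma beta_mem_betaSet (b : ℕ) : l.beta t b ∈ betaSet t l := ⟨b, rfl⟩

lemma beta_notMem_betaSet_add_one_iff (b : ℕ) :
    l.beta t b ∉ betaSet (t + 1) l ↔ l.part (b + 1) < l.part b := by
  have hanti := l.antitone (Nat.le_add_right b 1)
  refine ⟨fun h => lt_of_le_of_ne hanti fun heq => h ⟨b + 1, ?_⟩, ?_⟩
  · simp only [beta]
    push_cast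
    omega
  · rintro hlt ⟨b', hb'⟩
    simp only [beta] at hb'
    rcases le_or_gt b' b with hle | hgt
    · have := l.antitone hle
      omega
    · have := l.antitone (Nat.add_one_le_of_lt hgt)
      omega

lemma beta_add_one_notMem_betaSet_iff (b : ℕ) :
    l.beta (t + 1) b ∉ betaSet t l ↔ b = 0 ∨ l.part b < l.part (b - 1) := by
  refine ⟨fun h => ?_, ?_⟩
  · by_contra! hcon
    have := l.antitone (b.sub_le 1)
    refine h ⟨b - 1, ?_⟩
    simp only [beta]
    omega
  · rintro hb ⟨b', hb'⟩
    simp only [beta] at hb'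
    rcases le_or_gt b b' with hle | hgt
    · have := l.antitone hle
      omega
    · have := l.antitone (Nat.le_sub_one_of_lt hgt)
      omega

lemma removable_iff (p : ℕ × ℕ) : l.Removable p.1 p.2 ↔
    content t p = l.beta t p.1 ∧ l.beta t p.1 ∉ betaSet (t + 1) l := by
  rw [beta_notMem_betaSet_add_one_iff, Removable, content, beta]
  omega

lemma addable_iff (p : ℕ × ℕ) : l.Addable p.1 p.2 ↔
    content t p = l.beta (t + 1) p.1 ∧ l.beta (t + 1) p.1 ∉ betaSet t l := by
  rw [beta_add_one_notMem_betaSet_iff, Addable, content, beta]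
  omega

lemma eq_of_content_eq_beta {s : ℤ} {p q : ℕ × ℕ} (hp : content t p = l.beta s p.1)
    (hq : content t q = l.beta s q.1) (hpq : content t p = content t q) : p = q := by
  have hrow : p.1 = q.1 := (l.beta_strictAnti s).injective (hp.symm.trans (hpq.trans hq))
  have hcol : p.2 = q.2 := by
    simp only [content] at hpq
    omega
  exact Prod.ext hrow hcol

lemma bijOn_content_removable :
    Set.BijOn (content t) {p | l.Removable p.1 p.2} (betaSet t l \ betaSet (t + 1) l) := by
  simp only [l.removable_iff t]
  refine ⟨fun p hp => ?_, fun p hp q hq => l.eq_of_content_eq_beta t hp.1 hq.1, ?_⟩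
  · rw [hp.1]
    exact ⟨l.beta_mem_betaSet t p.1, hp.2⟩
  · rintro _ ⟨⟨b, rfl⟩, hb⟩
    have hpart := (l.beta_notMem_betaSet_add_one_iff t b).1 hb
    have hcontent : content t (b, l.part b - 1) = l.beta t b := by
      simp only [content, beta]
      omega
    exact ⟨(b, l.part b - 1), ⟨hcontent, hb⟩, hcontent⟩

lemma bijOn_content_addable :
    Set.BijOn (content t) {p | l.Addable p.1 p.2} (betaSet (t + 1) l \ betaSet t l) := by
  simp only [l.addable_iff t]
  refine ⟨fun p hp => ?_, fun p hp q hq => l.eq_of_content_eq_beta t hp.1 hq.1, ?_⟩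
  · rw [hp.1]
    exact ⟨l.beta_mem_betaSet (t + 1) p.1, hp.2⟩
  · rintro _ ⟨⟨b, rfl⟩, hb⟩
    have hcontent : content t (b, l.part b) = l.beta (t + 1) b := by
      simp only [content, beta]
      omega
    exact ⟨(b, l.part b), ⟨hcontent, hb⟩, hcontent⟩

lemma bddAbove_betaSet : BddAbove (betaSet t l) := by
  refine ⟨l.beta t 0, ?_⟩
  rintro _ ⟨b, rfl⟩
  exact (l.beta_strictAnti t).antitone b.zero_le

lemma exists_Iic_subset_betaSet : ∃ m, Set.Iic m ⊆ betaSet t l := by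
  obtain ⟨N, hN⟩ := l.finite_support
  refine ⟨t - N - 1, fun x hx => ⟨(t - x - 1).toNat, ?_⟩⟩
  rw [Set.mem_Iic] at hx
  rw [hN _ (by omega)]
  omega

end PartitionFun

lemma sub_mem_betaSet_sub_iff {l : PartitionFun} {s t x : ℤ} :
    x - s ∈ betaSet (t - s) l ↔ x ∈ betaSet t l :=
  exists_congr fun b => by omega

lemma runnerLevel_betaSet_add_one (e : ℕ) (t : ℤ) (l : PartitionFun) (i : ℤ) :
    runnerLevel e (betaSet (t + 1) l) i = runnerLevel e (betaSet t l) (i - 1) := by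
  simp only [runnerLevel, ← sub_mem_betaSet_sub_iff (s := 1) (t := t + 1), add_sub_cancel_right,
    add_sub_assoc]

namespace IsECore

variable {e : ℕ} {s : ℤ} {l : PartitionFun}

lemma of_charge (h : IsECore e s l) (t : ℤ) : IsECore e t l := fun x hx => by
  rw [← sub_mem_betaSet_sub_iff (s := t - s), sub_sub_cancel] at hx ⊢
  rw [sub_right_comm]
  exact h _ hx

lemma isFlush_betaSet (h : IsECore e s l) : IsFlush e (betaSet s l) :=
  ⟨l.bddAbove_betaSet s, l.exists_Iic_subset_betaSet s, h⟩

end IsECore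

end BetaSets

section Delta

variable {e r : ℕ} {a : Fin r → ℤ} {lam : Multipartition r} {j : Fin r}

lemma ncard_content_residue {t : ℤ} {S : Set (ℕ × ℕ)} {T : Set ℤ}
    (h : Set.BijOn (content t) S T) (e : ℕ) (i : ℤ) :
    {p | p ∈ S ∧ content t p % e = i % e}.ncard = {x | x ∈ T ∧ x % e = i % e}.ncard :=
  (h.inter_mapsTo (s₂ := {p | content t p % e = i % e}) (t₂ := {x | x % e = i % e})
    (fun _ hp => hp) Set.inter_subset_right).ncard_eq

lemma removableCount_eq_toNat (he : 0 < e) (h : IsECore e (a j) (lam j)) (i : ℤ) :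
    removableCount e a lam i j = (runnerLevel e (betaSet (a j) (lam j)) i -
      runnerLevel e (betaSet (a j) (lam j)) (i - 1)).toNat := by
  rw [← runnerLevel_betaSet_add_one, ← h.isFlush_betaSet.ncard_sdiff_residue
    (h.of_charge (a j + 1)).isFlush_betaSet he]
  exact ncard_content_residue ((lam j).bijOn_content_removable (a j)) e i

lemma addableCount_eq_toNat (he : 0 < e) (h : IsECore e (a j) (lam j)) (i : ℤ) :
    addableCount e a lam i j = (runnerLevel e (betaSet (a j) (lam j)) (i - 1) -
      runnerLevel e (betaSet (a j) (lam j)) i).toNat := by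
  rw [← runnerLevel_betaSet_add_one, ← (h.of_charge (a j + 1)).isFlush_betaSet.ncard_sdiff_residue
    h.isFlush_betaSet he]
  exact ncard_content_residue ((lam j).bijOn_content_addable (a j)) e i

lemma delta_eq_runnerLevel_sub (he : 0 < e) (h : IsECore e (a j) (lam j)) (i : ℤ) :
    delta e a lam i j = runnerLevel e (betaSet (a j) (lam j)) i -
      runnerLevel e (betaSet (a j) (lam j)) (i - 1) := by
  rw [delta, removableCount_eq_toNat he h, addableCount_eq_toNat he h]
  omega

lemma delta_congr {a' : Fin r → ℤ} (h : a j ≡ a' j [ZMOD e]) (i : ℤ) :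
    delta e a lam i j = delta e a' lam i j := by
  have hres (b c : ℕ) : (a j + c - b) % (e : ℤ) = (a' j + c - b) % e :=
    (h.add_right c).sub_right b
  simp only [delta, removableCount, addableCount, hres]

lemma abs_runnerLevel_sub_le_of_level {t t' d : ℤ} {l l' : PartitionFun} (he : 0 < e)
    (h : IsECore e t l) (h' : IsECore e t' l')
    (hd : ∀ n < e, |level e t l n - level e t' l' n| ≤ d) (i : ℤ) :
    |runnerLevel e (betaSet t l) i - runnerLevel e (betaSet t' l') i| ≤ d := by
  have he' : (0 : ℤ) < e := by exact_mod_cast he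
  obtain ⟨n, hn⟩ := Int.eq_ofNat_of_zero_le (Int.emod_nonneg i he'.ne')
  have hne : n < e := by
    have := Int.emod_lt_of_pos i he'
    omega
  rw [← h.isFlush_betaSet.runnerLevel_sub_runnerLevel_emod h'.isFlush_betaSet he, hn]
  exact hd n hne

end Delta

/-- Corollary 3.10: if a multicore `λ` admits a multicharge congruent
to `a` mod `e` for which all level differences are at most 1, then
`|δ^j_i(λ) − δ^k_i(λ)| ≤ 2` for all residues `i` and components `j, k`. -/
theorem stmt_0 {e r : ℕ} (he : 2 ≤ e) (hr : 0 < r) (a : Fin r → ℤ)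
    (lam : Multipartition r) (hcore : IsMulticore e a lam)
    (hcb : ∃ a' : Fin r → ℤ, (∀ j, (e : ℤ) ∣ (a' j - a j)) ∧
      ∀ i < e, ∀ j k : Fin r,
        |level e (a' j) (lam j) i - level e (a' k) (lam k) i| ≤ 1) :
    ∀ (i : ℤ) (j k : Fin r), |delta e a lam i j - delta e a lam i k| ≤ 2 := by
  obtain ⟨a', ha', hlevel⟩ := hcb
  intro i j k
  have he₀ : 0 < e := by omega
  have hcore' (j : Fin r) : IsECore e (a' j) (lam j) := (hcore j).of_charge _
  have hdelta (j : Fin r) : delta e a lam i j = runnerLevel e (betaSet (a' j) (lam j)) i -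
      runnerLevel e (betaSet (a' j) (lam j)) (i - 1) := by
    rw [delta_congr (Int.modEq_iff_dvd.2 (ha' j)), delta_eq_runnerLevel_sub he₀ (hcore' j)]
  have hrunner (i : ℤ) : |runnerLevel e (betaSet (a' j) (lam j)) i -
      runnerLevel e (betaSet (a' k) (lam k)) i| ≤ 1 :=
    abs_runnerLevel_sub_le_of_level he₀ (hcore' j) (hcore' k) (fun n hn => hlevel n hn j k) i
  rw [hdelta, hdelta, sub_sub_sub_comm]
  exact (abs_sub _ _).trans (add_le_add (hrunner i) (hrunner (i - 1)))

end AK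
end

section
/- If m is a multicore, then there is a sequence m = m_0, m_1, …, m_u of multicores such that, for every t = 0,…,u−1, m_{t+1} = s^{jk}_{il}(m_t) for some i,l ∈ {0,…,e−1} and j,k ∈ {1,…,r}, the weights satisfy w(m_{t+1}) ≤ w(m_t) for all t, and m_u lies in the core block of m (that is, m_u has the same hub as m and its weight is minimal among the weights of all multipartitions with that hub). -/
/-!
Combinatorial framework for multipartitions, residues, β-sets, abacus levels,
weights, hubs, core blocks and Scopes-type moves, following Fayers and the paper.
Rows and columns of Young diagrams are indexed from 0, so the node in row `b`
and column `c` (0-based) of component `j` has residue `a j + c - b` mod `e`.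
-/

open scoped Classical

namespace AK

/-!
Give every runner of every abacus its charge, the number of its beads relative to the vacuum. A
multicore is determined by the resulting integer matrix (runners × components), the column sums
are the multicharge, and the hub amounts to the row sums. Within a fixed hub the weight is
governed by `c_0`, that is by the total energy of the runners; a runner of charge `y` has energy at
least `y * (y - 1) / 2`, with equality when it is flush. So multicores of minimal weight correspond
to matrices of minimal Euclidean norm among those with the given margins, and `s^{jk}_{il}`
subtracts a `2 × 2` swap matrix.

If `x ≠ y` have the same margins, some swap matrix `s` has inner product at least `3` with `x - y`.
As `s` has squared norm `4`, either `x - s` is no longer than `x` or `y + s` is no longer than `y`,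
and both replacements shorten `x - y`. Taking `y` of minimal norm and repeating gives a path of
swaps from `x` to a minimum along which the norm never increases.
-/

section ContingencyTables

variable {ι κ : Type*}

/-- The set of columns in which row `i` of the matrix `d` is positive. -/
def posCols [Fintype κ] (d : ι × κ → ℤ) (i : ι) : Finset κ := {j | 0 < d (i, j)}

lemma mem_posCols [Fintype κ] {d : ι × κ → ℤ} {i : ι} {j : κ} :
    j ∈ posCols d i ↔ 0 < d (i, j) := by
  simp [posCols]

lemma posCols_nonempty_of_ne_zero [Fintype κ] {d : ι × κ → ℤ} {i : ι}
    (hrow : ∑ j, d (i, j) = 0) {j : κ} (hj : d (i, j) ≠ 0) : (posCols d i).Nonempty := by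
  obtain ⟨k, -, hk⟩ := Finset.exists_pos_of_sum_zero_of_exists_nonzero _ hrow
    ⟨j, Finset.mem_univ j, hj⟩
  exact ⟨k, mem_posCols.2 hk⟩

variable [Fintype ι]

lemma exists_neg_of_sum_zero_of_pos {f : ι → ℤ} (hf : ∑ t, f t = 0)
    {t : ι} (ht : 0 < f t) : ∃ s, f s < 0 := by
  obtain ⟨s, -, hs⟩ := Finset.exists_pos_of_sum_zero_of_exists_nonzero (s := Finset.univ)
    (fun t => -f t) (by simp [hf]) ⟨t, Finset.mem_univ t, by omega⟩
  exact ⟨s, by omega⟩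

lemma sub_dotProduct_self_sub (x s : ι → ℤ) :
    (x - s) ⬝ᵥ (x - s) = x ⬝ᵥ x - 2 * (x ⬝ᵥ s) + s ⬝ᵥ s := by
  rw [sub_dotProduct, dotProduct_sub, dotProduct_sub, dotProduct_comm s x]
  ring

lemma add_dotProduct_self_add (x s : ι → ℤ) :
    (x + s) ⬝ᵥ (x + s) = x ⬝ᵥ x + 2 * (x ⬝ᵥ s) + s ⬝ᵥ s := by
  rw [add_dotProduct, dotProduct_add, dotProduct_add, dotProduct_comm s x]
  ring

lemma dotProduct_self_nonneg (x : ι → ℤ) : 0 ≤ x ⬝ᵥ x :=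
  Finset.sum_nonneg fun _ _ => mul_self_nonneg _

variable [Fintype κ] {x y z : ι × κ → ℤ}

/-- Two integer matrices, written as functions on `ι × κ` so that `⬝ᵥ` is their entrywise inner
product, have the same row sums and the same column sums. -/
def SameMargins (x y : ι × κ → ℤ) : Prop :=
  (∀ i, ∑ j, x (i, j) = ∑ j, y (i, j)) ∧ ∀ j, ∑ i, x (i, j) = ∑ i, y (i, j)

lemma SameMargins.refl (x : ι × κ → ℤ) : SameMargins x x :=
  ⟨fun _ => rfl, fun _ => rfl⟩

lemma SameMargins.symm (h : SameMargins x y) : SameMargins y x :=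
  ⟨fun i => (h.1 i).symm, fun j => (h.2 j).symm⟩

lemma SameMargins.trans (hxy : SameMargins x y) (hyz : SameMargins y z) : SameMargins x z :=
  ⟨fun i => (hxy.1 i).trans (hyz.1 i), fun j => (hxy.2 j).trans (hyz.2 j)⟩

/-- Take for `i` a row with the fewest positive entries: the positive columns of another row `l`
which is negative in a positive column of `i` cannot all be positive columns of `i`. -/
lemma exists_rectangle_sign_pattern {d : ι × κ → ℤ} (hrow : ∀ i, ∑ j, d (i, j) = 0)
    (hcol : ∀ j, ∑ i, d (i, j) = 0) (hd : d ≠ 0) :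
    ∃ i l j k, 0 < d (i, j) ∧ d (l, j) < 0 ∧ 0 < d (l, k) ∧ d (i, k) ≤ 0 := by
  obtain ⟨⟨i₀, j₀⟩, hne⟩ := Function.ne_iff.1 hd
  have hnonempty : (Finset.univ.filter fun i => (posCols d i).Nonempty).Nonempty :=
    ⟨i₀, by simpa using posCols_nonempty_of_ne_zero (hrow i₀) hne⟩
  obtain ⟨i, hi, hmin⟩ := Finset.exists_min_image _ (fun i => (posCols d i).card) hnonempty
  simp only [Finset.mem_filter, Finset.mem_univ, true_and] at hi hmin
  obtain ⟨j, hij⟩ := hi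
  obtain ⟨l, hlj⟩ := exists_neg_of_sum_zero_of_pos (hcol j) (mem_posCols.1 hij)
  have hnotsub : ¬ posCols d l ⊆ posCols d i := fun hsub => by
    have heq := Finset.eq_of_subset_of_card_le hsub
      (hmin l (posCols_nonempty_of_ne_zero (hrow l) hlj.ne))
    rw [← heq, mem_posCols] at hij
    omega
  obtain ⟨k, hlk, hik⟩ := Finset.not_subset.1 hnotsub
  rw [mem_posCols] at hij hlk hik
  exact ⟨i, l, j, k, hij, hlj, hlk, not_lt.1 hik⟩

variable [DecidableEq ι] [DecidableEq κ] {i l : ι} {j k : κ}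

/-- The matrix with entries `1` at `(i, j)`, `(l, k)` and `-1` at `(i, k)`, `(l, j)`; subtracting
it is the effect of `s^{jk}_{il}` on the levels of the runners. -/
def swapMatrix (i l : ι) (j k : κ) : ι × κ → ℤ := fun p =>
  (Pi.single i 1 - Pi.single l 1 : ι → ℤ) p.1 * (Pi.single j 1 - Pi.single k 1 : κ → ℤ) p.2

lemma dotProduct_swapMatrix (z : ι × κ → ℤ) (i l : ι) (j k : κ) :
    z ⬝ᵥ swapMatrix i l j k = z (i, j) - z (i, k) - z (l, j) + z (l, k) := by
  have hsingle : swapMatrix i l j k = Pi.single (i, j) 1 - Pi.single (i, k) 1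
      - Pi.single (l, j) 1 + Pi.single (l, k) 1 := by
    ext ⟨i', j'⟩
    simp only [swapMatrix, Pi.sub_apply, Pi.add_apply, Pi.single_apply, Prod.mk.injEq, ite_and]
    split_ifs <;> ring
  simp [hsingle, dotProduct_add, dotProduct_sub]

lemma swapMatrix_dotProduct_self (hil : i ≠ l) (hjk : j ≠ k) :
    swapMatrix i l j k ⬝ᵥ swapMatrix i l j k = 4 := by
  rw [dotProduct_swapMatrix]
  simp [swapMatrix, hil, hjk, hil.symm, hjk.symm]

lemma sameMargins_sub_swapMatrix (x : ι × κ → ℤ) (i l : ι) (j k : κ) :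
    SameMargins (x - swapMatrix i l j k) x := by
  constructor <;> intro _ <;>
    simp [swapMatrix, Finset.sum_sub_distrib, ← Finset.mul_sum, ← Finset.sum_mul]

lemma sameMargins_add_swapMatrix (x : ι × κ → ℤ) (i l : ι) (j k : κ) :
    SameMargins (x + swapMatrix i l j k) x := by
  simpa using (sameMargins_sub_swapMatrix (x + swapMatrix i l j k) i l j k).symm

/-- `x'` arises from `x` by subtracting a swap matrix without increasing the norm. -/
def SwapStep (x x' : ι × κ → ℤ) : Prop :=
  ∃ i l j k, i ≠ l ∧ j ≠ k ∧ x' = x - swapMatrix i l j k ∧ x' ⬝ᵥ x' ≤ x ⬝ᵥ x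

lemma SwapStep.sameMargins {x x' : ι × κ → ℤ} (h : SwapStep x x') : SameMargins x' x := by
  obtain ⟨i, l, j, k, -, -, rfl, -⟩ := h
  exact sameMargins_sub_swapMatrix x i l j k

lemma sameMargins_of_reflTransGen {x x' : ι × κ → ℤ} (h : Relation.ReflTransGen SwapStep x x') :
    SameMargins x' x := by
  induction h with
  | refl => exact .refl x
  | tail _ hstep ih => exact hstep.sameMargins.trans ih

lemma SameMargins.exists_swapMatrix_dotProduct_ge (h : SameMargins x y) (hne : x ≠ y) :
    ∃ i l j k, i ≠ l ∧ j ≠ k ∧ 3 ≤ (x - y) ⬝ᵥ swapMatrix i l j k := by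
  obtain ⟨i, l, j, k, hij, hlj, hlk, hik⟩ := exists_rectangle_sign_pattern (d := x - y)
    (fun i => by simp [Finset.sum_sub_distrib, h.1])
    (fun j => by simp [Finset.sum_sub_distrib, h.2]) (sub_ne_zero.2 hne)
  refine ⟨i, l, j, k, ?_, ?_, ?_⟩
  · rintro rfl
    omega
  · rintro rfl
    omega
  · rw [dotProduct_swapMatrix]
    omega

lemma SameMargins.exists_reflTransGen_dotProduct_self_le (h : SameMargins x y) :
    ∃ x', Relation.ReflTransGen SwapStep x x' ∧ x' ⬝ᵥ x' ≤ y ⬝ᵥ y := by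
  induction hn : ((x - y) ⬝ᵥ (x - y)).toNat using Nat.strong_induction_on generalizing x y with
  | _ n ih
  rcases eq_or_ne x y with rfl | hne
  · exact ⟨x, .refl, le_rfl⟩
  obtain ⟨i, l, j, k, hil, hjk, hinner⟩ := h.exists_swapMatrix_dotProduct_ge hne
  have hnorm := swapMatrix_dotProduct_self hil hjk
  have hxs := sameMargins_sub_swapMatrix x i l j k
  have hys := sameMargins_add_swapMatrix y i l j k
  have hstep : ∀ x', x' = x - swapMatrix i l j k → x' ⬝ᵥ x' ≤ x ⬝ᵥ x → SwapStep x x' :=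
    fun x' hx' hle => ⟨i, l, j, k, hil, hjk, hx', hle⟩
  generalize swapMatrix i l j k = s at *
  have hcloser : ((x - y - s) ⬝ᵥ (x - y - s)).toNat < n := by
    have := sub_dotProduct_self_sub (x - y) s
    have := dotProduct_self_nonneg (x - y - s)
    omega
  by_cases hle : (x - s) ⬝ᵥ (x - s) ≤ x ⬝ᵥ x
  · obtain ⟨x', hpath, hx'⟩ := ih _ hcloser (hxs.trans h) (by rw [sub_right_comm])
    exact ⟨x', .head (hstep _ rfl hle) hpath, hx'⟩
  · obtain ⟨x', hpath, hx'⟩ := ih _ hcloser (h.trans hys.symm) (by rw [sub_sub])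
    have := sub_dotProduct_self_sub x s
    have := add_dotProduct_self_add y s
    have := sub_dotProduct x y s
    exact ⟨x', hpath, by omega⟩

lemma exists_reflTransGen_swapStep_minimal (x : ι × κ → ℤ) :
    ∃ x', Relation.ReflTransGen SwapStep x x' ∧
      ∀ y, SameMargins x' y → x' ⬝ᵥ x' ≤ y ⬝ᵥ y := by
  obtain ⟨y, hy, hmin⟩ := (measure fun y : ι × κ → ℤ => (y ⬝ᵥ y).toNat).wf.has_min
    {y | SameMargins x y} ⟨x, .refl x⟩
  obtain ⟨x', hpath, hle⟩ := SameMargins.exists_reflTransGen_dotProduct_self_le hy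
  refine ⟨x', hpath, fun z hz => hle.trans ?_⟩
  have hyz := hmin z ((sameMargins_of_reflTransGen hpath).symm.trans hz)
  simp only [WellFoundedRelation.rel, InvImage] at hyz
  have := dotProduct_self_nonneg z
  omega

end ContingencyTables

lemma exists_seq_of_reflTransGen {α : Type*} {R : α → α → Prop} {a b : α}
    (h : Relation.ReflTransGen R a b) :
    ∃ (u : ℕ) (s : ℕ → α), s 0 = a ∧ s u = b ∧ ∀ t < u, R (s t) (s (t + 1)) := by
  induction h using Relation.ReflTransGen.head_induction_on with
  | refl => exact ⟨0, fun _ => b, rfl, rfl, by simp⟩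
  | @head a c hac _ ih =>
    obtain ⟨u, s, hzero, hend, hstep⟩ := ih
    refine ⟨u + 1, fun n => Nat.casesOn n a s, rfl, hend, fun t ht => ?_⟩
    cases t with
    | zero => simpa [hzero] using hac
    | succ t => exact hstep t (by omega)

section MayaDiagrams

/-- A set of integers containing all sufficiently small and no sufficiently large integers. The
β-set of a partition and each of its runners are of this kind. -/
def IsMaya (S : Set ℤ) : Prop := BddAbove S ∧ BddBelow Sᶜ

/-- The difference between the indicator functions of `S` and of the negative integers. -/
noncomputable def excess (S : Set ℤ) (x : ℤ) : ℤ :=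
  (if x ∈ S then 1 else 0) - if x < 0 then 1 else 0

/-- The regularized sum of `g` over `S`: the sum over `S` minus the sum over the negative integers.
It has only finitely many nonzero terms when `S` is a Maya diagram. -/
noncomputable def regSum (S : Set ℤ) (g : ℤ → ℤ) : ℤ := ∑ᶠ x, excess S x * g x

/-- The charge of a Maya diagram: its number of elements relative to the negative integers. -/
noncomputable def charge (S : Set ℤ) : ℤ := regSum S 1

/-- The energy of a Maya diagram: the sum of its elements relative to the negative integers. -/
noncomputable def energy (S : Set ℤ) : ℤ := regSum S id

variable {S : Set ℤ}

lemma IsMaya.hasFiniteSupport_excess_mul (hS : IsMaya S) (g : ℤ → ℤ) :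
    (fun x => excess S x * g x).HasFiniteSupport := by
  obtain ⟨⟨u, hu⟩, l, hl⟩ := hS
  refine (Set.finite_Icc (min l 0) (max u 0)).subset fun x hx => ?_
  have hexcess : excess S x ≠ 0 := left_ne_zero_of_mul hx
  have hmem : x ∈ S → x ≤ u := fun h => hu h
  have hnotMem : x ∉ S → l ≤ x := fun h => hl h
  unfold excess at hexcess
  rw [Set.mem_Icc]
  by_cases x ∈ S <;> simp_all <;> omega

lemma isMaya_Iio_union (A : ℤ) (F : Finset ℤ) : IsMaya (Set.Iio A ∪ F) :=
  ⟨bddAbove_Iio.union F.bddAbove, A, fun _ hx => not_lt.1 fun h => hx (.inl h)⟩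

lemma isMaya_Iio (A : ℤ) : IsMaya (Set.Iio A) := by
  simpa using isMaya_Iio_union A ∅

lemma IsMaya.exists_eq_Iio_union (hS : IsMaya S) :
    ∃ (A : ℤ) (F : Finset ℤ), (∀ x ∈ F, A ≤ x) ∧ S = Set.Iio A ∪ F := by
  obtain ⟨⟨u, hu⟩, l, hl⟩ := hS
  have hfin : (S \ Set.Iio l).Finite :=
    (Set.finite_Icc l u).subset fun x hx => ⟨not_lt.1 hx.2, hu hx.1⟩
  refine ⟨l, hfin.toFinset, fun x hx => not_lt.1 (hfin.mem_toFinset.1 hx).2, ?_⟩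
  rw [hfin.coe_toFinset, Set.union_sdiff_cancel]
  exact fun x hx => not_not.1 fun h => not_lt.2 (hl h) hx

lemma regSum_Iio_union (g : ℤ → ℤ) {A : ℤ} {F : Finset ℤ} (hF : ∀ x ∈ F, A ≤ x) :
    regSum (Set.Iio A ∪ F) g = regSum (Set.Iio A) g + ∑ x ∈ F, g x := by
  have hsplit : ∀ x, excess (Set.Iio A ∪ F) x * g x
      = excess (Set.Iio A) x * g x + if x ∈ F then g x else 0 := fun x => by
    have := hF x
    by_cases hx : x ∈ F <;> by_cases hxA : x < A <;> grind [excess]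
  have hsupp : (fun x => if x ∈ F then g x else 0).support ⊆ F := fun x hx => by
    by_contra h
    simp_all
  simp only [regSum, hsplit]
  rw [finsum_add_distrib ((isMaya_Iio A).hasFiniteSupport_excess_mul g)
    (F.finite_toSet.subset hsupp), finsum_eq_sum_of_support_subset _ hsupp]
  simp [Finset.sum_ite_mem]

lemma regSum_Iio_add_one (g : ℤ → ℤ) (A : ℤ) :
    regSum (Set.Iio (A + 1)) g = regSum (Set.Iio A) g + g A := by
  have hinsert : Set.Iio (A + 1) = Set.Iio A ∪ ({A} : Finset ℤ) := by
    ext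
    simp [le_iff_lt_or_eq]
  rw [hinsert, regSum_Iio_union g (by simp), Finset.sum_singleton]

lemma regSum_Iio_zero (g : ℤ → ℤ) : regSum (Set.Iio 0) g = 0 := by
  simp [regSum, excess]

lemma charge_Iio (A : ℤ) : charge (Set.Iio A) = A := by
  induction A using Int.induction_on with
  | zero => exact regSum_Iio_zero 1
  | succ n ih => rw [charge, regSum_Iio_add_one, ← charge, ih, Pi.one_apply]
  | pred n ih =>
    have := regSum_Iio_add_one 1 (-n - 1)
    rw [sub_add_cancel, ← charge, ← charge, ih, Pi.one_apply] at this
    omega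

lemma two_mul_energy_Iio (A : ℤ) : 2 * energy (Set.Iio A) = A * (A - 1) := by
  induction A using Int.induction_on with
  | zero => simp [energy, regSum_Iio_zero]
  | succ n ih =>
    rw [energy, regSum_Iio_add_one, ← energy, mul_add, ih, id]
    ring
  | pred n ih =>
    have := regSum_Iio_add_one id (-n - 1)
    rw [sub_add_cancel, ← energy, ← energy, id] at this
    linarith

lemma IsMaya.regSum_sub_const (hS : IsMaya S) (c : ℤ) :
    regSum S (fun x => x - c) = energy S - charge S * c := by
  simp only [energy, charge, regSum, id, Pi.one_apply, mul_sub, mul_one, finsum_mul]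
  exact finsum_sub_distrib (hS.hasFiniteSupport_excess_mul id)
    (hS.hasFiniteSupport_excess_mul fun _ => c)

/-- With `y` the charge of `S`, the two sides differ by the sum of `x - y` over `S` relative to
`Set.Iio y`, which has no negative terms. -/
lemma IsMaya.energy_Iio_charge_le (hS : IsMaya S) : energy (Set.Iio (charge S)) ≤ energy S := by
  set y := charge S with hy
  have hle : regSum (Set.Iio y) (fun x => x - y) ≤ regSum S (fun x => x - y) := by
    refine finsum_le_finsum' ((isMaya_Iio y).hasFiniteSupport_excess_mul _)
      (hS.hasFiniteSupport_excess_mul _) fun x => ?_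
    by_cases hx : x ∈ S <;> by_cases hxy : x < y <;> grind [excess]
  rw [hS.regSum_sub_const, (isMaya_Iio y).regSum_sub_const, charge_Iio, ← hy] at hle
  linarith

lemma IsMaya.eq_Iio_charge (hS : IsMaya S) (hpred : ∀ q ∈ S, q - 1 ∈ S) :
    S = Set.Iio (charge S) := by
  obtain ⟨⟨u, hu⟩, l, hl⟩ := hS
  have hne : S.Nonempty := ⟨l - 1, not_not.1 fun h => by simpa using hl h⟩
  have hmax : sSup S ∈ S := Int.csSup_mem hne ⟨u, hu⟩
  have hmem : ∀ n : ℕ, sSup S - n ∈ S := fun n => by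
    induction n with
    | zero => simpa using hmax
    | succ n ih => simpa [sub_sub] using hpred _ ih
  have hIio : S = Set.Iio (sSup S + 1) := by
    ext x
    rw [Set.mem_Iio, Int.lt_add_one_iff]
    refine ⟨fun hx => le_csSup ⟨u, hu⟩ hx, fun hx => ?_⟩
    simpa [Int.toNat_of_nonneg (sub_nonneg.2 hx)] using hmem (sSup S - x).toNat
  have hcharge := congrArg charge hIio
  rw [charge_Iio] at hcharge
  rwa [hcharge]

end MayaDiagrams

section Runners

/-- Runner `i` of the abacus with `e` runners displaying `S`: the levels `q` of its beads. -/
def runner (e : ℕ) (S : Set ℤ) (i : ℤ) : Set ℤ := {q | q * e + i ∈ S}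

/-- The indicator function of the residue class of `i` modulo `e`. -/
noncomputable def residueInd (e : ℕ) (i x : ℤ) : ℤ := if x % e = i % e then 1 else 0

variable {e : ℕ} {S : Set ℤ}

lemma mul_add_fin_ediv (q : ℤ) (i : Fin e) : (q * e + i) / e = q := by
  have := i.pos
  rw [Int.add_comm, Int.add_mul_ediv_right _ _ (by omega), Int.ediv_eq_zero_of_lt] <;> omega

lemma mul_add_fin_emod (q : ℤ) (i : Fin e) : (q * e + i) % e = i := by
  rw [Int.add_comm, Int.add_mul_emod_self_right, Int.emod_eq_of_lt] <;> omega

lemma excess_runner (S : Set ℤ) (i : Fin e) (q : ℤ) :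
    excess (runner e S i) q = excess S (q * e + i) := by
  have hneg : q < 0 ↔ q * e + i < 0 := by
    simpa [mul_add_fin_ediv] using
      Int.ediv_lt_iff_lt_mul (a := q * e + i) (b := 0) (Int.natCast_pos.2 i.pos)
  rw [excess, excess, if_congr hneg rfl rfl]
  rfl

variable [NeZero e]

lemma IsMaya.isMaya_runner (hS : IsMaya S) (i : ℤ) : IsMaya (runner e S i) := by
  obtain ⟨⟨u, hu⟩, l, hl⟩ := hS
  have he : (0 : ℤ) < e := Int.natCast_pos.2 (NeZero.pos e)
  refine ⟨⟨(u - i) / e, fun q hq => ?_⟩, (l - i) / e, fun q hq => ?_⟩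
  · exact Int.le_ediv_of_mul_le he (by linarith [hu hq])
  · exact Int.ediv_le_of_le_mul he (by linarith [hl hq])

lemma IsMaya.regSum_eq_sum_runner (hS : IsMaya S) (g : ℤ → ℤ) :
    regSum S g = ∑ i : Fin e, regSum (runner e S i) fun q => g (q * e + i) := by
  let f : ℤ → ℤ := fun x => excess S x * g x
  let E : Fin e × ℤ ≃ ℤ := (Equiv.prodComm _ _).trans (Int.divModEquiv e).symm
  have hfin : (f ∘ E).HasFiniteSupport :=
    (hS.hasFiniteSupport_excess_mul g).comp_of_injective E.injective
  calc regSum S g = ∑ᶠ p, (f ∘ E) p := (finsum_comp_equiv E).symm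
    _ = ∑ i : Fin e, ∑ᶠ q, f (q * e + i) := by
      rw [finsum_curry _ hfin, finsum_eq_sum_of_fintype]
      rfl
    _ = _ := by simp only [f, regSum, excess_runner]

lemma IsMaya.charge_eq_sum_runner (hS : IsMaya S) :
    charge S = ∑ i : Fin e, charge (runner e S i) :=
  hS.regSum_eq_sum_runner 1

lemma IsMaya.regSum_residueInd (hS : IsMaya S) (i : Fin e) :
    regSum S (residueInd e i) = charge (runner e S i) := by
  have hmod : ∀ l : Fin e, (l : ℤ) % e = i % e ↔ l = i := fun l => by
    rw [Int.emod_eq_of_lt (by omega) (by omega), Int.emod_eq_of_lt (by omega) (by omega)]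
    omega
  rw [hS.regSum_eq_sum_runner (e := e), Finset.sum_eq_single i]
  · simp [residueInd, charge, regSum]
  · intro l _ hl
    simp [residueInd, regSum, hmod, hl]
  · simp

lemma IsMaya.regSum_ediv (hS : IsMaya S) :
    regSum S (· / (e : ℤ)) = ∑ i : Fin e, energy (runner e S i) := by
  simp only [hS.regSum_eq_sum_runner (e := e), mul_add_fin_ediv]
  rfl

end Runners

section BetaSets

variable (lam : PartitionFun) (aj : ℤ)

/-- The element of the β-set contributed by row `b`. -/
def bead (b : ℕ) : ℤ := lam.part b + aj - (b + 1)

lemma bead_strictAnti : StrictAnti (bead lam aj) := fun b c hbc => by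
  have := lam.antitone hbc.le
  simp only [bead]
  omega

/-- The nodes `(b, c)` of the Young diagram of `lam`, as a finite set. -/
noncomputable def cells : Finset (ℕ × ℕ) :=
  (Finset.range lam.finite_support.choose).biUnion fun b =>
    (Finset.range (lam.part b)).image (Prod.mk b)

variable {lam aj}

lemma mem_cells {p : ℕ × ℕ} : p ∈ cells lam ↔ p.2 < lam.part p.1 := by
  obtain ⟨b, c⟩ := p
  have hrow : c < lam.part b → b < lam.finite_support.choose := fun hc => by
    by_contra hb
    rw [lam.finite_support.choose_spec b (not_lt.1 hb)] at hc
    exact Nat.not_lt_zero _ hc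
  simp only [cells, Finset.mem_biUnion, Finset.mem_range, Finset.mem_image, Prod.mk.injEq]
  constructor
  · rintro ⟨_, _, _, hc, rfl, rfl⟩
    exact hc
  · exact fun hc => ⟨b, hrow hc, c, hc, rfl, rfl⟩

lemma mem_betaSet {x : ℤ} : x ∈ betaSet aj lam ↔ ∃ b, bead lam aj b = x :=
  exists_congr fun _ => eq_comm

lemma betaSet_eq_Iio_union {N : ℕ} (hN : ∀ b, N ≤ b → lam.part b = 0) :
    betaSet aj lam = Set.Iio (aj - N) ∪ ((Finset.range N).image (bead lam aj) : Finset ℤ) := by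
  ext x
  simp only [mem_betaSet, Set.mem_union, Set.mem_Iio, Finset.coe_image, Finset.coe_range,
    Set.mem_image]
  constructor
  · rintro ⟨b, rfl⟩
    rcases lt_or_ge b N with hb | hb
    · exact .inr ⟨b, hb, rfl⟩
    · have := hN b hb
      left
      simp only [bead]
      omega
  · rintro (hx | ⟨b, -, rfl⟩)
    · refine ⟨(aj - 1 - x).toNat, ?_⟩
      have := hN (aj - 1 - x).toNat (by omega)
      simp only [bead]
      omega
    · exact ⟨b, rfl⟩

lemma isMaya_betaSet (aj : ℤ) (lam : PartitionFun) : IsMaya (betaSet aj lam) := by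
  obtain ⟨N, hN⟩ := lam.finite_support
  rw [betaSet_eq_Iio_union hN]
  exact isMaya_Iio_union _ _

lemma regSum_betaSet {N : ℕ} (hN : ∀ b, N ≤ b → lam.part b = 0) (g : ℤ → ℤ) :
    regSum (betaSet aj lam) g =
      regSum (Set.Iio (aj - N)) g + ∑ b ∈ Finset.range N, g (bead lam aj b) := by
  have hge : ∀ x ∈ (Finset.range N).image (bead lam aj), aj - N ≤ x := by
    simp only [Finset.mem_image, Finset.mem_range, bead]
    rintro _ ⟨b, hb, rfl⟩
    omega
  rw [betaSet_eq_Iio_union hN, regSum_Iio_union g hge,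
    Finset.sum_image (bead_strictAnti lam aj).injective.injOn]

lemma regSum_Iio_sub_natCast (g : ℤ → ℤ) (A : ℤ) (N : ℕ) :
    regSum (Set.Iio A) g =
      regSum (Set.Iio (A - N)) g + ∑ b ∈ Finset.range N, g (A - (b + 1)) := by
  induction N with
  | zero => simp
  | succ N ih =>
    have := regSum_Iio_add_one g (A - (N + 1))
    rw [Finset.sum_range_succ, ih, Nat.cast_succ]
    rw [show A - ((N : ℤ) + 1) + 1 = A - N by ring] at this
    linarith

lemma sum_cells (f : ℕ × ℕ → ℤ) {N : ℕ} (hN : ∀ b, N ≤ b → lam.part b = 0) :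
    ∑ p ∈ cells lam, f p =
      ∑ b ∈ Finset.range N, ∑ c ∈ Finset.range (lam.part b), f (b, c) := by
  refine Finset.sum_finset_product _ _ _ fun p => ?_
  rw [mem_cells, Finset.mem_range, Finset.mem_range]
  refine ⟨fun hp => ⟨?_, hp⟩, And.right⟩
  by_contra hlt
  have := hN p.1 (not_lt.1 hlt)
  omega

/-- Building up a row of the diagram node by node moves its bead up by one position each time. -/
lemma regSum_betaSet_eq_add_sum_cells (g : ℤ → ℤ) :
    regSum (betaSet aj lam) g = regSum (Set.Iio aj) g +
      ∑ p ∈ cells lam, (g (aj + p.2 - p.1) - g (aj + p.2 - p.1 - 1)) := by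
  obtain ⟨N, hN⟩ := lam.finite_support
  rw [regSum_betaSet hN, regSum_Iio_sub_natCast g aj N, sum_cells _ hN, add_assoc,
    ← Finset.sum_add_distrib]
  refine congrArg _ (Finset.sum_congr rfl fun b _ => ?_)
  have htelescope := Finset.sum_range_sub (fun c : ℕ => g (aj + c - b - 1)) (lam.part b)
  have hbead : bead lam aj b = aj + lam.part b - b - 1 := by
    rw [bead]
    ring
  have hshift : ∀ c : ℕ, aj + (c + 1 : ℕ) - b - 1 = aj + c - b := fun c => by
    push_cast
    ring
  simp only [hshift, Nat.cast_zero, add_zero] at htelescope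
  rw [htelescope, hbead, sub_sub aj]
  ring

lemma charge_betaSet (aj : ℤ) (lam : PartitionFun) : charge (betaSet aj lam) = aj := by
  rw [charge, regSum_betaSet_eq_add_sum_cells, ← charge, charge_Iio]
  simp

/-- The partition obtained by adding a new first row of length `n` on top of `lam`. -/
def consRow (n : ℕ) (lam : PartitionFun) (h : lam.part 0 ≤ n) : PartitionFun where
  part
    | 0 => n
    | b + 1 => lam.part b
  antitone := antitone_nat_of_succ_le fun b => by
    cases b with
    | zero => exact h
    | succ b => exact lam.antitone b.le_succ
  finite_support := by
    obtain ⟨N, hN⟩ := lam.finite_support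
    exact ⟨N + 1, fun
      | b + 1, hb => hN b (Nat.le_of_succ_le_succ hb)⟩

lemma betaSet_consRow {n : ℕ} (h : lam.part 0 ≤ n) :
    betaSet (aj + 1) (consRow n lam h) = insert (n + aj) (betaSet aj lam) := by
  have hzero : bead (consRow n lam h) (aj + 1) 0 = n + aj := by
    simp only [bead, consRow]
    push_cast
    ring
  have hsucc : ∀ b, bead (consRow n lam h) (aj + 1) (b + 1) = bead lam aj b := fun b => by
    simp only [bead, consRow]
    push_cast
    ring
  ext x
  rw [Set.mem_insert_iff, mem_betaSet, mem_betaSet, ← Nat.or_exists_add_one, hzero]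
  simp only [hsucc, eq_comm]

lemma exists_betaSet_eq_Iio_union (A : ℤ) {F : Finset ℤ} (hF : ∀ x ∈ F, A ≤ x) :
    ∃ lam, betaSet (A + F.card) lam = Set.Iio A ∪ F := by
  induction F using Finset.induction_on_max with
  | empty =>
    refine ⟨⟨0, antitone_const, 0, fun _ _ => rfl⟩, ?_⟩
    rw [betaSet_eq_Iio_union (N := 0) fun _ _ => rfl]
    simp
  | insert m F hm ih =>
    obtain ⟨lam, hlam⟩ := ih fun x hx => hF x (Finset.mem_insert_of_mem hx)
    have hlt : bead lam (A + F.card) 0 < m := by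
      have hmem : bead lam (A + F.card) 0 ∈ Set.Iio A ∪ F := hlam ▸ mem_betaSet.2 ⟨0, rfl⟩
      rcases hmem with hlow | hmemF
      · exact lt_of_lt_of_le hlow (hF m (Finset.mem_insert_self m F))
      · exact hm _ hmemF
    simp only [bead] at hlt
    have hrow : ((m - (A + F.card)).toNat : ℤ) = m - (A + F.card) := by omega
    refine ⟨consRow (m - (A + F.card)).toNat lam (by omega), ?_⟩
    rw [Finset.card_insert_of_notMem fun h => (hm m h).false, Nat.cast_succ, ← add_assoc,
      betaSet_consRow, hlam, hrow, sub_add_cancel, Finset.coe_insert, Set.union_insert]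

lemma IsMaya.exists_betaSet_charge_eq {S : Set ℤ} (hS : IsMaya S) :
    ∃ lam, betaSet (charge S) lam = S := by
  obtain ⟨A, F, hF, rfl⟩ := hS.exists_eq_Iio_union
  obtain ⟨lam, hlam⟩ := exists_betaSet_eq_Iio_union A hF
  exact ⟨lam, by rw [← hlam, charge_betaSet]⟩

end BetaSets

section Residues

variable {e : ℕ} {aj : ℤ} {lam : PartitionFun} {b c : ℕ}

lemma bead_eq_bead_add_one_iff :
    bead lam aj b = bead lam aj c + 1 ↔ c = b + 1 ∧ lam.part c = lam.part b := by
  constructor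
  · intro h
    have hbc : b < c := (bead_strictAnti lam aj).lt_iff_gt.1 (by omega)
    have := lam.antitone hbc.le
    simp only [bead] at h
    omega
  · rintro ⟨rfl, hpart⟩
    simp only [bead]
    omega

lemma bead_sub_one_notMem_betaSet :
    bead lam aj b - 1 ∉ betaSet aj lam ↔ lam.part (b + 1) < lam.part b := by
  have := lam.antitone (Nat.le_add_right b 1)
  simp only [mem_betaSet, eq_sub_iff_add_eq, eq_comm (b := bead lam aj b),
    bead_eq_bead_add_one_iff, exists_eq_left]
  omega

lemma bead_add_one_notMem_betaSet :
    bead lam aj b + 1 ∉ betaSet aj lam ↔ b = 0 ∨ lam.part b < lam.part (b - 1) := by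
  simp only [mem_betaSet, bead_eq_bead_add_one_iff]
  cases b with
  | zero => simp
  | succ b =>
    have := lam.antitone (Nat.le_add_right b 1)
    simp only [add_left_inj, exists_eq_left', Nat.add_sub_cancel]
    omega

lemma removable_iff :
    lam.Removable b c ↔ bead lam aj b = aj + c - b ∧ aj + c - b - 1 ∉ betaSet aj lam := by
  have hbead : lam.part b = c + 1 ↔ bead lam aj b = aj + c - b := by
    simp only [bead]
    omega
  rw [PartitionFun.Removable, hbead]
  refine and_congr_right fun h => ?_
  rw [← h, bead_sub_one_notMem_betaSet]
  omega

lemma addable_iff :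
    lam.Addable b c ↔ bead lam aj b = aj + c - b - 1 ∧ aj + c - b ∉ betaSet aj lam := by
  have hbead : lam.part b = c ↔ bead lam aj b = aj + c - b - 1 := by
    simp only [bead]
    omega
  rw [PartitionFun.Addable, hbead]
  refine and_congr_right fun h => ?_
  rw [← bead_add_one_notMem_betaSet (aj := aj), h, sub_add_cancel]

variable {r : ℕ} (a : Fin r → ℤ) (mu : Multipartition r)

lemma removableCount_eq_ncard (i : ℤ) (j : Fin r) :
    removableCount e a mu i j = Set.ncard {x : ℤ | (x ∈ betaSet (a j) (mu j) ∧
      x - 1 ∉ betaSet (a j) (mu j)) ∧ x % e = i % e} := by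
  refine Set.ncard_congr (fun p _ => a j + p.2 - p.1) ?_ ?_ ?_
  · rintro p ⟨hp, hres⟩
    rw [removable_iff (aj := a j)] at hp
    exact ⟨⟨mem_betaSet.2 ⟨p.1, hp.1⟩, hp.2⟩, hres⟩
  · rintro p q ⟨hp, -⟩ ⟨hq, -⟩ hpq
    rw [removable_iff (aj := a j)] at hp hq
    have hrow : p.1 = q.1 := (bead_strictAnti _ _).injective (hp.1.trans (hpq.trans hq.1.symm))
    refine Prod.ext hrow ?_
    simp only [hrow] at hpq
    omega
  · rintro x ⟨⟨hx, hpred⟩, hres⟩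
    obtain ⟨b, rfl⟩ := mem_betaSet.1 hx
    have hpart := bead_sub_one_notMem_betaSet.1 hpred
    have hbead : a j + ((mu j).part b - 1 : ℕ) - b = bead (mu j) (a j) b := by
      simp only [bead]
      omega
    refine ⟨(b, (mu j).part b - 1), ⟨?_, ?_⟩, hbead⟩
    · rw [removable_iff (aj := a j), hbead]
      exact ⟨rfl, hpred⟩
    · rwa [hbead]

lemma addableCount_eq_ncard (i : ℤ) (j : Fin r) :
    addableCount e a mu i j = Set.ncard {x : ℤ | (x ∉ betaSet (a j) (mu j) ∧
      x - 1 ∈ betaSet (a j) (mu j)) ∧ x % e = i % e} := by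
  refine Set.ncard_congr (fun p _ => a j + p.2 - p.1) ?_ ?_ ?_
  · rintro p ⟨hp, hres⟩
    rw [addable_iff (aj := a j)] at hp
    exact ⟨⟨hp.2, mem_betaSet.2 ⟨p.1, hp.1⟩⟩, hres⟩
  · rintro p q ⟨hp, -⟩ ⟨hq, -⟩ hpq
    rw [addable_iff (aj := a j)] at hp hq
    have hrow : p.1 = q.1 := (bead_strictAnti _ _).injective
      (hp.1.trans ((congrArg (· - 1) hpq).trans hq.1.symm))
    refine Prod.ext hrow ?_
    simp only [hrow] at hpq
    omega
  · rintro x ⟨⟨hx, hpred⟩, hres⟩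
    obtain ⟨b, hb⟩ := mem_betaSet.1 hpred
    have hbead : a j + (mu j).part b - b = x := by
      simp only [bead] at hb
      omega
    refine ⟨(b, (mu j).part b), ⟨?_, ?_⟩, hbead⟩
    · rw [addable_iff (aj := a j), hbead]
      exact ⟨hb, hx⟩
    · rwa [hbead]

end Residues

section HubsAndWeights

lemma hasFiniteSupport_ite {α : Type*} {p : α → Prop} [DecidablePred p] (hp : {x | p x}.Finite)
    (f : α → ℤ) : (fun x => if p x then f x else 0).HasFiniteSupport :=
  hp.subset fun x hx => by
    by_contra h
    exact hx (if_neg h)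

lemma natCast_ncard_eq_finsum {α : Type*} {p : α → Prop} [DecidablePred p]
    (hp : {x | p x}.Finite) : ({x | p x}.ncard : ℤ) = ∑ᶠ x, if p x then 1 else 0 := by
  have hsupp : (fun x => if p x then (1 : ℤ) else 0).support ⊆ hp.toFinset := fun x hx => by
    simpa using hx
  rw [finsum_eq_sum_of_support_subset _ hsupp, Set.ncard_eq_toFinset_card _ hp]
  simp [Finset.filter_true_of_mem]

lemma residueInd_add_one (e : ℕ) (i x : ℤ) : residueInd e (i + 1) (x + 1) = residueInd e i x := by
  have : (x + 1) % e = (i + 1) % e ↔ x % e = i % e := Int.emod_add_cancel_right 1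
  simp only [residueInd, this]

lemma residueInd_zero_eq_ediv_sub (e : ℕ) [NeZero e] (x : ℤ) :
    residueInd e 0 x = x / e - (x - 1) / e := by
  have he : (0 : ℤ) < e := Int.natCast_pos.2 (NeZero.pos e)
  have hx := Int.mul_ediv_add_emod x e
  have hlt := Int.emod_lt_of_pos x he
  have hnonneg := Int.emod_nonneg x he.ne'
  have hdiv : (x - 1) / e = x / e - residueInd e 0 x := by
    rw [Int.ediv_eq_iff_of_pos he, residueInd, Int.zero_emod]
    split_ifs <;> constructor <;> grind
  omega

variable {e : ℕ} {S : Set ℤ}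

lemma IsMaya.finite_boundary (hS : IsMaya S) : {x | x ∈ S ↔ x - 1 ∉ S}.Finite := by
  obtain ⟨⟨u, hu⟩, l, hl⟩ := hS
  refine (Set.finite_Icc l (u + 1)).subset fun x hx => ?_
  have hlower : ∀ y ∉ S, l ≤ y := fun y hy => hl hy
  by_cases hxS : x ∈ S
  · have := hu hxS
    exact ⟨by linarith [hlower _ (hx.1 hxS)], by linarith⟩
  · have := hu (not_not.1 (mt hx.2 hxS))
    exact ⟨hlower x hxS, by linarith⟩

lemma IsMaya.ncard_boundary_sub (hS : IsMaya S) (i : ℤ) :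
    (Set.ncard {x : ℤ | (x ∈ S ∧ x - 1 ∉ S) ∧ x % e = i % e} : ℤ)
      - Set.ncard {x : ℤ | (x ∉ S ∧ x - 1 ∈ S) ∧ x % e = i % e}
      = regSum S (residueInd e i) - regSum S (residueInd e (i - 1)) - residueInd e i 0 := by
  have hshiftSum :
      regSum S (residueInd e (i - 1)) = ∑ᶠ x, excess S (x - 1) * residueInd e i x := by
    refine Eq.trans ?_ (finsum_comp_equiv (Equiv.addRight 1))
    simp [regSum, ← residueInd_add_one e (i - 1)]
  have hshift : (fun x => excess S (x - 1) * residueInd e i x).HasFiniteSupport := by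
    simpa [Function.comp_def] using
      (hS.hasFiniteSupport_excess_mul fun x => residueInd e i (x + 1)).comp_of_injective
        (Equiv.subRight 1).injective
  have hzero : residueInd e i 0 = ∑ᶠ x, if x = 0 then residueInd e i x else 0 := by
    rw [finsum_eq_single _ 0 fun x hx => if_neg hx, if_pos rfl]
  have hrise : {x | (x ∈ S ∧ x - 1 ∉ S) ∧ x % e = i % e}.Finite :=
    hS.finite_boundary.subset fun x hx => by simp_all
  have hfall : {x | (x ∉ S ∧ x - 1 ∈ S) ∧ x % e = i % e}.Finite :=
    hS.finite_boundary.subset fun x hx => by simp_all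
  rw [natCast_ncard_eq_finsum hrise, natCast_ncard_eq_finsum hfall, hshiftSum, hzero, regSum,
    ← finsum_sub_distrib (hasFiniteSupport_ite hrise _) (hasFiniteSupport_ite hfall _),
    ← finsum_sub_distrib (hS.hasFiniteSupport_excess_mul _) hshift,
    ← finsum_sub_distrib ((hS.hasFiniteSupport_excess_mul _).fun_sub hshift)
      (hasFiniteSupport_ite (p := (· = 0)) (Set.finite_singleton 0) _)]
  refine finsum_congr fun x => ?_
  have hzero_iff : x = 0 ↔ ¬ x < 0 ∧ x - 1 < 0 := by
    omega
  simp only [excess, residueInd, hzero_iff]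
  have : x < 0 → x - 1 < 0 := by omega
  grind

variable {r : ℕ} (e) (a : Fin r → ℤ) (lam mu : Multipartition r)

lemma nodeCount_eq_sum_cells (i : ℤ) :
    (nodeCount e a lam i : ℤ) =
      ∑ j, ∑ p ∈ cells (lam j), residueInd e i (a j + p.2 - p.1) := by
  let toNode : (_ : Fin r) × ℕ × ℕ → Node r := fun t => (t.2.1, t.2.2, t.1)
  have hinj : toNode.Injective := by
    rintro ⟨j, b, c⟩ ⟨j', b', c'⟩ h
    simp_all [toNode]
  have himage : {x : Node r | (lam x.2.2).InDiag x.1 x.2.1 ∧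
      (a x.2.2 + (x.2.1 : ℤ) - (x.1 : ℤ)) % (e : ℤ) = i % e} = toNode ''
        ((Finset.univ.sigma fun j => {p ∈ cells (lam j) | (a j + p.2 - p.1) % (e : ℤ) = i % e} :
          Finset ((_ : Fin r) × ℕ × ℕ)) : Set _) := by
    ext ⟨b, c, j⟩
    simp [toNode, mem_cells, PartitionFun.InDiag]
  rw [nodeCount, himage, Set.ncard_image_of_injective _ hinj, Set.ncard_coe_finset,
    Finset.card_sigma]
  simp [residueInd, Finset.sum_boole]

lemma nodeCount_sub_nodeCount_add_one (i : ℤ) :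
    (nodeCount e a lam i : ℤ) - nodeCount e a lam (i + 1) =
      ∑ j, (regSum (betaSet (a j) (lam j)) (residueInd e i)
        - regSum (Set.Iio (a j)) (residueInd e i)) := by
  simp only [nodeCount_eq_sum_cells, ← Finset.sum_sub_distrib, regSum_betaSet_eq_add_sum_cells,
    add_sub_cancel_left]
  refine Finset.sum_congr rfl fun j _ => Finset.sum_congr rfl fun p _ => ?_
  rw [← residueInd_add_one e i (_ - 1), sub_add_cancel]

lemma nodeCount_zero [NeZero e] :
    (nodeCount e a lam 0 : ℤ) = ∑ j, (regSum (betaSet (a j) (lam j)) (· / (e : ℤ))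
      - regSum (Set.Iio (a j)) (· / (e : ℤ))) := by
  simp only [nodeCount_eq_sum_cells, regSum_betaSet_eq_add_sum_cells, add_sub_cancel_left,
    residueInd_zero_eq_ediv_sub]

/-- The total charge of the runners of residue `i` in the abacuses of all components. -/
noncomputable def residueCharge (i : ℤ) : ℤ :=
  ∑ j, regSum (betaSet (a j) (lam j)) (residueInd e i)

lemma hub_eq_residueCharge_sub (i : ℤ) :
    hub e a lam i =
      residueCharge e a lam i - residueCharge e a lam (i - 1) - r * residueInd e i 0 := by
  simp only [hub, delta, removableCount_eq_ncard, addableCount_eq_ncard,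
    (isMaya_betaSet _ _).ncard_boundary_sub, residueCharge, Finset.sum_sub_distrib]
  simp

lemma sum_residueCharge [NeZero e] : ∑ i : Fin e, residueCharge e a lam i = ∑ j, a j := by
  simp only [residueCharge, (isMaya_betaSet _ _).regSum_residueInd]
  rw [Finset.sum_comm]
  simp only [← (isMaya_betaSet _ _).charge_eq_sum_runner, charge_betaSet]

variable {e a lam mu}

lemma sameHub_iff_residueCharge_eq [NeZero e] :
    SameHub e a lam mu ↔ ∀ i, residueCharge e a lam i = residueCharge e a mu i := by
  refine ⟨fun h => ?_, fun h i => by simp only [hub_eq_residueCharge_sub, h]⟩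
  let d : ℤ → ℤ := fun i => residueCharge e a lam i - residueCharge e a mu i
  have hperiodic : Function.Periodic d 1 := fun i => by
    have := h (i + 1)
    simp only [hub_eq_residueCharge_sub, add_sub_cancel_right] at this
    simp only [d]
    omega
  have hconst : ∀ i, d i = d 0 := fun i => by simpa using hperiodic.int_mul_eq i
  have hsum : ∑ i : Fin e, d i = 0 := by
    simp only [d, Finset.sum_sub_distrib, sum_residueCharge, sub_self]
  have hzero : d 0 = 0 := by simpa [hconst, NeZero.ne e] using hsum
  exact fun i => sub_eq_zero.1 ((hconst i).trans hzero)

/-- Multipartitions with the same hub have the same differences `c_i - c_{i+1}`, so all their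
node counts differ by the same amount. -/
lemma SameHub.weight_le_weight [NeZero e] (h : SameHub e a lam mu)
    (hle : nodeCount e a lam 0 ≤ nodeCount e a mu 0) : weight e a lam ≤ weight e a mu := by
  have hdiff : ∀ i : ℤ, (nodeCount e a lam i : ℤ) - nodeCount e a lam (i + 1) =
      nodeCount e a mu i - nodeCount e a mu (i + 1) := fun i => by
    have := sameHub_iff_residueCharge_eq.1 h i
    simp only [residueCharge] at this
    simp only [nodeCount_sub_nodeCount_add_one, Finset.sum_sub_distrib, this]
  have hperiodic : Function.Periodic
      (fun i => (nodeCount e a lam i : ℤ) - nodeCount e a mu i) 1 := fun i => by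
    linarith [hdiff i]
  have hle' : ∀ i, nodeCount e a lam i ≤ nodeCount e a mu i := fun i => by
    have := hperiodic.int_mul_eq i
    simp only [Int.cast_id, mul_one] at this
    omega
  have hdiff' : ∀ i : ℤ, (nodeCount e a lam i : ℚ) - nodeCount e a lam (i + 1) =
      nodeCount e a mu i - nodeCount e a mu (i + 1) := fun i => mod_cast hdiff i
  simp only [weight, hdiff']
  gcongr
  exact hle' _

end HubsAndWeights

section FlushAbacus

variable {e : ℕ}

lemma mul_add_fin_inj {q q' : ℤ} {i i' : Fin e} :
    q * e + i = q' * e + i' ↔ q = q' ∧ i = i' := by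
  refine ⟨fun h => ⟨?_, ?_⟩, by rintro ⟨rfl, rfl⟩; rfl⟩
  · rw [← mul_add_fin_ediv q i, h, mul_add_fin_ediv]
  · have := congrArg (· % (e : ℤ)) h
    simp only [mul_add_fin_emod] at this
    omega

/-- The abacus all of whose beads are pushed up as far as possible, the first vacant position on
runner `i` being at level `L i`. The β-sets of `e`-cores are of this kind. -/
def flushAbacus (e : ℕ) (L : Fin e → ℤ) : Set ℤ :=
  {x | ∃ (i : Fin e) (q : ℤ), q < L i ∧ q * e + i = x}

lemma mul_add_fin_mem_flushAbacus {L : Fin e → ℤ} {q : ℤ} {i : Fin e} :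
    q * e + i ∈ flushAbacus e L ↔ q < L i := by
  simp only [flushAbacus, Set.mem_ofPred_eq, mul_add_fin_inj]
  exact ⟨by rintro ⟨_, _, h, rfl, rfl⟩; exact h, fun h => ⟨i, q, h, rfl, rfl⟩⟩

lemma runner_flushAbacus (L : Fin e → ℤ) (i : Fin e) :
    runner e (flushAbacus e L) i = Set.Iio (L i) :=
  Set.ext fun _ => mul_add_fin_mem_flushAbacus

lemma sub_mem_flushAbacus {L : Fin e → ℤ} {x : ℤ} (hx : x ∈ flushAbacus e L) :
    x - e ∈ flushAbacus e L := by
  obtain ⟨i, q, hq, rfl⟩ := hx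
  exact ⟨i, q - 1, by omega, by ring⟩

lemma isGreatest_bead_flushAbacus (L : Fin e → ℤ) (i : Fin e) :
    IsGreatest {x : ℤ | x % e = (i : ℤ) % e ∧ x ∈ flushAbacus e L} ((L i - 1) * e + i) := by
  refine ⟨⟨by simp, mul_add_fin_mem_flushAbacus.2 (by omega)⟩, ?_⟩
  rintro _ ⟨hmod, l, q, hq, rfl⟩
  obtain rfl : l = i := by
    rw [mul_add_fin_emod, Int.emod_eq_of_lt] at hmod <;> omega
  gcongr
  omega

variable [NeZero e]

lemma exists_mul_add_fin_eq (x : ℤ) : ∃ (q : ℤ) (i : Fin e), q * e + i = x := by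
  obtain ⟨⟨q, i⟩, h⟩ := (Int.divModEquiv e).symm.surjective x
  exact ⟨q, i, h⟩

lemma eq_flushAbacus {S : Set ℤ} {L : Fin e → ℤ} (h : ∀ i : Fin e, runner e S i = Set.Iio (L i)) :
    S = flushAbacus e L := by
  ext x
  obtain ⟨q, i, rfl⟩ := exists_mul_add_fin_eq (e := e) x
  rw [mul_add_fin_mem_flushAbacus, ← Set.mem_Iio, ← h i]
  rfl

lemma isMaya_of_isMaya_runner {S : Set ℤ} (h : ∀ i : Fin e, IsMaya (runner e S i)) :
    IsMaya S := by
  have hunion : ∀ T : Set ℤ,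
      T = ⋃ i ∈ (Set.univ : Set (Fin e)), (fun q : ℤ => q * e + i) '' runner e T i := by
    refine fun T => Set.ext fun x => ?_
    obtain ⟨q, i, rfl⟩ := exists_mul_add_fin_eq (e := e) x
    simp [runner, mul_add_fin_inj]
  have hmono : ∀ i : Fin e, Monotone fun q : ℤ => q * e + i := fun i q q' hq => by
    dsimp only
    gcongr
  constructor
  · rw [hunion S, Set.finite_univ.bddAbove_biUnion]
    exact fun i _ => (hmono i).map_bddAbove (h i).1
  · rw [hunion Sᶜ, Set.finite_univ.bddBelow_biUnion]
    exact fun i _ => (hmono i).map_bddBelow (h i).2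

lemma isMaya_flushAbacus (L : Fin e → ℤ) : IsMaya (flushAbacus e L) :=
  isMaya_of_isMaya_runner fun i => runner_flushAbacus L i ▸ isMaya_Iio (L i)

lemma charge_flushAbacus (L : Fin e → ℤ) : charge (flushAbacus e L) = ∑ i, L i := by
  simp only [(isMaya_flushAbacus L).charge_eq_sum_runner (e := e), runner_flushAbacus, charge_Iio]

lemma isLeast_gap_flushAbacus (L : Fin e → ℤ) (i : Fin e) :
    IsLeast {x : ℤ | x % e = (i : ℤ) % e ∧ x ∉ flushAbacus e L} (L i * e + i) := by
  refine ⟨⟨by simp, by simp [mul_add_fin_mem_flushAbacus]⟩, ?_⟩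
  rintro x ⟨hmod, hx⟩
  obtain ⟨q, l, rfl⟩ := exists_mul_add_fin_eq (e := e) x
  obtain rfl : l = i := by
    rw [mul_add_fin_emod, Int.emod_eq_of_lt] at hmod <;> omega
  rw [mul_add_fin_mem_flushAbacus, not_lt] at hx
  gcongr

lemma moveBead_flushAbacus (L : Fin e → ℤ) {i l : Fin e} (hil : i ≠ l) :
    moveBead e i l (flushAbacus e L) =
      flushAbacus e (L - (Pi.single i 1 - Pi.single l 1)) := by
  rw [moveBead, (isGreatest_bead_flushAbacus L i).csSup_eq, (isLeast_gap_flushAbacus L l).csInf_eq]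
  ext x
  obtain ⟨q, t, rfl⟩ := exists_mul_add_fin_eq (e := e) x
  simp only [Set.mem_insert_iff, Set.mem_sdiff, Set.mem_singleton_iff, mul_add_fin_inj,
    mul_add_fin_mem_flushAbacus, Pi.sub_apply, Pi.single_apply]
  grind

end FlushAbacus

section Multicores

variable {e r : ℕ} {a : Fin r → ℤ} {m m' lam mu : Multipartition r}

/-- The matrix of charges of all runners of the abacuses of the components of `lam`. For a
multicore, its entry at `(i, j)` is the level of the first vacant position on runner `i` of
component `j`, which is one more than the paper's `ℓ_{ij}`. -/
noncomputable def abacusCharge (e : ℕ) (a : Fin r → ℤ) (lam : Multipartition r) :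
    Fin e × Fin r → ℤ :=
  fun p => charge (runner e (betaSet (a p.2) (lam p.2)) p.1)

variable [NeZero e]

lemma sum_abacusCharge_runner (e : ℕ) [NeZero e] (a : Fin r → ℤ) (lam : Multipartition r)
    (j : Fin r) : ∑ i, abacusCharge e a lam (i, j) = a j := by
  simp only [abacusCharge, ← (isMaya_betaSet _ _).charge_eq_sum_runner, charge_betaSet]

lemma sum_abacusCharge_component (e : ℕ) [NeZero e] (a : Fin r → ℤ) (lam : Multipartition r)
    (i : Fin e) : ∑ j, abacusCharge e a lam (i, j) = residueCharge e a lam i := by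
  simp only [abacusCharge, residueCharge, (isMaya_betaSet _ _).regSum_residueInd]

lemma sameHub_iff_sameMargins :
    SameHub e a lam mu ↔ SameMargins (abacusCharge e a lam) (abacusCharge e a mu) := by
  simp only [sameHub_iff_residueCharge_eq, SameMargins, sum_abacusCharge_runner,
    sum_abacusCharge_component, implies_true, and_true]
  refine ⟨fun h i => h i, fun h x => ?_⟩
  obtain ⟨q, i, rfl⟩ := exists_mul_add_fin_eq (e := e) x
  have hresidue : residueInd e (q * e + i) = residueInd e i :=
    funext fun x => by simp [residueInd]
  simpa only [residueCharge, hresidue] using h i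

lemma IsMulticore.runner_eq_Iio (hm : IsMulticore e a m) (i : Fin e) (j : Fin r) :
    runner e (betaSet (a j) (m j)) i = Set.Iio (abacusCharge e a m (i, j)) := by
  refine ((isMaya_betaSet _ _).isMaya_runner _).eq_Iio_charge fun q hq => ?_
  simpa only [runner, Set.mem_ofPred_eq, sub_one_mul, sub_add_eq_add_sub] using hm j _ hq

lemma IsMulticore.betaSet_eq_flushAbacus (hm : IsMulticore e a m) (j : Fin r) :
    betaSet (a j) (m j) = flushAbacus e fun i => abacusCharge e a m (i, j) :=
  eq_flushAbacus fun i => hm.runner_eq_Iio i j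

lemma exists_isMulticore_abacusCharge_eq {y : Fin e × Fin r → ℤ}
    (hy : ∀ j, ∑ i, y (i, j) = a j) :
    ∃ m : Multipartition r, IsMulticore e a m ∧ abacusCharge e a m = y := by
  have hbeta : ∀ j, ∃ lam, betaSet (a j) lam = flushAbacus e fun i => y (i, j) := fun j => by
    rw [← hy j, ← charge_flushAbacus]
    exact (isMaya_flushAbacus _).exists_betaSet_charge_eq
  choose m hm using hbeta
  refine ⟨m, fun j x hx => ?_, funext fun ⟨i, j⟩ => ?_⟩
  · rw [hm] at hx ⊢
    exact sub_mem_flushAbacus hx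
  · simp only [abacusCharge, hm, runner_flushAbacus, charge_Iio]

variable (e a lam) in
lemma dotProduct_abacusCharge_self_sub :
    abacusCharge e a lam ⬝ᵥ abacusCharge e a lam - ∑ j, a j =
      2 * ∑ j, ∑ i, energy (Set.Iio (abacusCharge e a lam (i, j))) := by
  simp only [← sum_abacusCharge_runner e a lam, dotProduct, Fintype.sum_prod_type_right,
    ← Finset.sum_sub_distrib, Finset.mul_sum, two_mul_energy_Iio, mul_sub_one]

lemma IsMulticore.nodeCount_zero_le (hm : IsMulticore e a m)
    (hle : abacusCharge e a m ⬝ᵥ abacusCharge e a m ≤ abacusCharge e a mu ⬝ᵥ abacusCharge e a mu) :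
    nodeCount e a m 0 ≤ nodeCount e a mu 0 := by
  have henergy : ∑ j, ∑ i : Fin e, energy (runner e (betaSet (a j) (m j)) i) ≤
      ∑ j, ∑ i : Fin e, energy (runner e (betaSet (a j) (mu j)) i) :=
    calc _ = ∑ j, ∑ i, energy (Set.Iio (abacusCharge e a m (i, j))) := by
          simp only [hm.runner_eq_Iio]
      _ ≤ ∑ j, ∑ i, energy (Set.Iio (abacusCharge e a mu (i, j))) := by
          linarith [dotProduct_abacusCharge_self_sub e a m, dotProduct_abacusCharge_self_sub e a mu]
      _ ≤ _ := by
          gcongr with j _ i _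
          exact ((isMaya_betaSet _ _).isMaya_runner _).energy_Iio_charge_le
  have hcount : (nodeCount e a m 0 : ℤ) ≤ nodeCount e a mu 0 := by
    simp only [nodeCount_zero, (isMaya_betaSet _ _).regSum_ediv, Finset.sum_sub_distrib]
    gcongr
  exact_mod_cast hcount

lemma IsMulticore.weight_le_weight (hm : IsMulticore e a m)
    (hmargins : SameMargins (abacusCharge e a m) (abacusCharge e a mu))
    (hle : abacusCharge e a m ⬝ᵥ abacusCharge e a m ≤ abacusCharge e a mu ⬝ᵥ abacusCharge e a mu) :
    weight e a m ≤ weight e a mu :=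
  (sameHub_iff_sameMargins.2 hmargins).weight_le_weight (hm.nodeCount_zero_le hle)

lemma isSwap_of_abacusCharge_eq_sub (hm : IsMulticore e a m) (hm' : IsMulticore e a m')
    {i l : Fin e} {j k : Fin r} (hil : i ≠ l) (hjk : j ≠ k)
    (h : abacusCharge e a m' = abacusCharge e a m - swapMatrix i l j k) :
    IsSwap e a i l j k m m' := by
  intro t
  simp only [swapSets, hm.betaSet_eq_flushAbacus, hm'.betaSet_eq_flushAbacus, h,
    Function.update_of_ne hjk.symm, moveBead_flushAbacus _ hil, moveBead_flushAbacus _ hil.symm]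
  rcases eq_or_ne t k with rfl | htk
  · rw [Function.update_self]
    congr 1
    ext s
    simp [swapMatrix, hjk]
  rcases eq_or_ne t j with rfl | htj
  · rw [Function.update_of_ne htk, Function.update_self]
    congr 1
    ext s
    simp [swapMatrix, hjk]
  · simp [swapMatrix, htk, htj]

/-- `m'` is a multicore `s^{jk}_{il}(m)` whose weight is at most that of `m`. -/
def MulticoreStep (e : ℕ) (a : Fin r → ℤ) (m m' : Multipartition r) : Prop :=
  IsMulticore e a m' ∧ (∃ (i l : ℕ) (j k : Fin r), i < e ∧ l < e ∧ i ≠ l ∧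
    IsSwap e a i l j k m m') ∧ weight e a m' ≤ weight e a m

lemma SwapStep.exists_multicoreStep {x' : Fin e × Fin r → ℤ} (hm : IsMulticore e a m)
    (h : SwapStep (abacusCharge e a m) x') :
    ∃ m', MulticoreStep e a m m' ∧ abacusCharge e a m' = x' := by
  have hmargins := h.sameMargins
  obtain ⟨m', hm', rfl⟩ := exists_isMulticore_abacusCharge_eq (a := a) fun j =>
    (hmargins.2 j).trans (sum_abacusCharge_runner e a m j)
  obtain ⟨i, l, j, k, hil, hjk, hsub, hle⟩ := h
  exact ⟨m', ⟨hm', ⟨i, l, j, k, i.isLt, l.isLt, Fin.val_ne_of_ne hil,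
    isSwap_of_abacusCharge_eq_sub hm hm' hil hjk hsub⟩, hm'.weight_le_weight hmargins hle⟩, rfl⟩

lemma exists_reflTransGen_multicoreStep {x' : Fin e × Fin r → ℤ} (hm : IsMulticore e a m)
    (h : Relation.ReflTransGen SwapStep (abacusCharge e a m) x') :
    ∃ m', Relation.ReflTransGen (MulticoreStep e a) m m' ∧ IsMulticore e a m' ∧
      abacusCharge e a m' = x' := by
  induction h with
  | refl => exact ⟨m, .refl, hm, rfl⟩
  | tail _ hstep ih =>
    obtain ⟨m₁, hpath, hm₁, rfl⟩ := ih
    obtain ⟨m', hm', hcharge⟩ := hstep.exists_multicoreStep hm₁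
    exact ⟨m', hpath.tail hm', hm'.1, hcharge⟩

end Multicores

/-- Lemma 4.1: from any multicore there is a sequence of multicores,
each obtained from the previous by some `s^{jk}_{il}`, with non-increasing weights,
ending in a multicore lying in the core block of `m`. -/
theorem stmt_1 {e r : ℕ} (he : 2 ≤ e) (hr : 0 < r) (a : Fin r → ℤ)
    (m : Multipartition r) (hcore : IsMulticore e a m) :
    ∃ (u : ℕ) (seq : ℕ → Multipartition r),
      seq 0 = m ∧
      (∀ t ≤ u, IsMulticore e a (seq t)) ∧
      (∀ t < u, ∃ (i l : ℕ) (j k : Fin r), i < e ∧ l < e ∧ i ≠ l ∧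
        IsSwap e a i l j k (seq t) (seq (t + 1))) ∧
      (∀ t < u, weight e a (seq (t + 1)) ≤ weight e a (seq t)) ∧
      SameHub e a (seq u) m ∧ MinimalWeight e a (seq u) := by
  have : NeZero e := ⟨by omega⟩
  obtain ⟨x, hpath, hmin⟩ := exists_reflTransGen_swapStep_minimal (abacusCharge e a m)
  obtain ⟨m', hpath', hcore', rfl⟩ := exists_reflTransGen_multicoreStep hcore hpath
  obtain ⟨u, seq, rfl, rfl, hstep⟩ := exists_seq_of_reflTransGen hpath'
  refine ⟨u, seq, rfl, fun t ht => ?_, fun t ht => (hstep t ht).2.1, fun t ht => (hstep t ht).2.2,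
    sameHub_iff_sameMargins.2 (sameMargins_of_reflTransGen hpath), fun mu hmu => ?_⟩
  · cases t with
    | zero => exact hcore
    | succ t => exact (hstep t ht).1
  · have hmargins := sameHub_iff_sameMargins.1 hmu
    exact hcore'.weight_le_weight hmargins (hmin _ hmargins)

end AK
end
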